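/- arXiv:1710.00675 — 5 statements merged into one kernel-verified Lean document; each statement's English description precedes it below -/
import Mathlib

section
/- Let S be a finite nonempty type, p : S → PMF S a transition function, and for each state s let μ_{p,s} denote the Markov-chain trajectory measure on ℕ → S started at s (obtained by Ionescu–Tulcea from the kernel induced by p). Let q : S → PMF S be another transition function such that for every state s the support of q s equals the support of p s. Then for every start state s and every target set T ⊆ S, the measure μ_{p,s} assigns probability 1 to the event Reach(T) = {ω : ℕ → S | ∃ n, ω n ∈ T} if and only if μ_{q,s} assigns probability 1 to Reach(T). (This is the Markov-chain core of Lemma 1: almost-sure reachability depends only on the supports of the transition distributions.) -/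
open MeasureTheory
open scoped Classical

/-- `IsMarkovTraj p s μ` says that `μ` is the trajectory measure on `ℕ → S` of the
Markov chain with one-step transition function `p` started at `s` (as obtained by the
Ionescu–Tulcea construction from the kernel induced by `p`): it is the unique probability
measure whose cylinder probabilities are the Markov-chain ones. -/
def IsMarkovTraj {S : Type*} [MeasurableSpace S] (p : S → PMF S) (s : S)
    (μ : Measure (ℕ → S)) : Prop :=
  IsProbabilityMeasure μ ∧
    ∀ (n : ℕ) (w : Fin (n + 1) → S),
      μ {ω | ∀ i : Fin (n + 1), ω i = w i} =
        if w 0 = s then ∏ i : Fin n, p (w i.castSucc) (w i.succ) else 0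

/-!
The reachability probability `h` of a target `T` is `1` on `T` and satisfies `h t = ∑ᵤ p t u * h u`
off `T`. By this equation, both the set where `h = 1` and the set where `h` attains its minimum over
the states reachable from `s` are closed under steps off `T`. When there are finitely many such
states the minimum is attained, so if every one of them can reach `T`, following a path from a
minimizer to `T` shows that the minimum is `1`. Conversely, if `h s = 1` then `h = 1` at every state
reachable from `s` before `T`, so none of these states is cut off from `T`. This criterion mentions
only the supports.
-/

open Relation
open scoped ENNReal

lemma eq_of_tsum_pmf_mul_le {α : Type*} (P : PMF α) {f g : α → ℝ≥0∞}
    (hle : ∀ a ∈ P.support, f a ≤ g a) (hfin : ∑' a, P a * f a ≠ ∞)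
    (hsum : ∑' a, P a * g a ≤ ∑' a, P a * f a) {a : α} (ha : a ∈ P.support) : f a = g a := by
  refine (hle a ha).antisymm (not_lt.1 fun hlt ↦ hsum.not_gt ?_)
  refine ENNReal.tsum_lt_tsum hfin (fun b ↦ ?_)
    ((ENNReal.mul_lt_mul_iff_right ha (P.apply_ne_top a)).2 hlt)
  by_cases hb : b ∈ P.support
  · exact mul_le_mul_right (hle b hb) _
  · simp [(P.apply_eq_zero_iff b).2 hb]

lemma tsum_pmf_mul_const {α : Type*} (P : PMF α) (c : ℝ≥0∞) : ∑' a, P a * c = c := by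
  rw [ENNReal.tsum_mul_right, P.tsum_coe, one_mul]

lemma tsum_iSup_of_monotone {α : Type*} {f : ℕ → α → ℝ≥0∞} (hf : Monotone f) :
    ∑' a, ⨆ n, f n a = ⨆ n, ∑' a, f n a := by
  simp_rw [ENNReal.tsum_eq_iSup_sum,
    fun F : Finset α ↦ ENNReal.finsetSum_iSup_of_monotone (s := F) fun a _ _ hmn ↦ hf hmn a]
  exact iSup_comm

lemma measure_eq_toMeasure_of_singleton {α : Type*} [MeasurableSpace α]
    [MeasurableSingletonClass α] {μ : Measure α} [IsProbabilityMeasure μ] {P : PMF α}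
    (h : ∀ a, μ {a} = P a) : μ = P.toMeasure := by
  refine (Measure.eq_of_le_of_isProbabilityMeasure (Measure.le_iff.2 fun A hA ↦ ?_)).symm
  calc P.toMeasure A = ∑' a : A, μ {a.1} := by
        simp_rw [P.toMeasure_apply hA, h, tsum_subtype]
    _ ≤ μ (⋃ a : A, {a.1}) :=
        tsum_meas_le_meas_iUnion_of_disjoint μ (fun a ↦ measurableSet_singleton a.1)
          fun a b hab ↦ Set.disjoint_singleton.2 (Subtype.coe_injective.ne hab)
    _ = μ A := by rw [Set.iUnion_of_singleton_coe]

section Chain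

variable {S : Type*} (p : S → PMF S) (T : Set S)

/-- The law of the first `n + 1` states of the Markov chain with transition function `p` started
at `s`. -/
noncomputable def pathPMF : (n : ℕ) → S → PMF (Fin (n + 1) → S)
  | 0, s => PMF.pure fun _ ↦ s
  | n + 1, s => (p s).bind fun u ↦ (pathPMF n u).map fun w ↦ Fin.cons s w

/-- The probability that the chain started at `s` visits `T` at one of the times `0, …, n`. -/
noncomputable def reachWithinProb (n : ℕ) (s : S) : ℝ≥0∞ :=
  (pathPMF p n s).toOuterMeasure {w | ∃ i, w i ∈ T}

/-- The probability that the chain started at `s` ever visits `T`, as the limit of the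
probabilities for bounded horizons. -/
noncomputable def reachProb (s : S) : ℝ≥0∞ :=
  ⨆ n, reachWithinProb p T n s

/-- The positive-probability transitions of the chain stopped on entering `T`. -/
def StepOff (t u : S) : Prop :=
  t ∉ T ∧ u ∈ (p t).support

variable {p T}

lemma pathPMF_apply (n : ℕ) (s : S) (w : Fin (n + 1) → S) :
    pathPMF p n s w = if w 0 = s then ∏ i : Fin n, p (w i.castSucc) (w i.succ) else 0 := by
  induction n generalizing s with
  | zero =>
    have hconst : (w = fun _ ↦ s) ↔ w 0 = s := by simp [funext_iff, Fin.forall_fin_one]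
    simp [pathPMF, PMF.pure_apply, hconst]
  | succ n ih =>
    cases w using Fin.consCases with
    | cons x w =>
      simp only [pathPMF, PMF.bind_apply, PMF.map_apply, Fin.cons_inj, Fin.cons_zero]
      by_cases hx : x = s
      · simp [hx, ih, Fin.prod_univ_succ (n := n)]
      · simp [hx]

lemma reachWithinProb_of_mem {t : S} (ht : t ∈ T) (n : ℕ) : reachWithinProb p T n t = 1 := by
  refine (PMF.toOuterMeasure_apply_eq_one_iff _ _).2 fun w hw ↦ ⟨0, ?_⟩
  rw [PMF.mem_support_iff, pathPMF_apply] at hw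
  rwa [(ite_ne_right_iff.1 hw).1]

lemma reachWithinProb_zero_of_notMem {t : S} (ht : t ∉ T) : reachWithinProb p T 0 t = 0 := by
  simp [reachWithinProb, pathPMF, ht]

lemma reachWithinProb_succ_of_notMem {t : S} (ht : t ∉ T) (n : ℕ) :
    reachWithinProb p T (n + 1) t = ∑' u, p t u * reachWithinProb p T n u := by
  simp [reachWithinProb, pathPMF, Set.preimage, Fin.exists_fin_succ (n := n + 1), ht]

lemma monotone_reachWithinProb : Monotone (reachWithinProb p T) := by
  refine monotone_nat_of_le_succ fun n ↦ ?_
  induction n with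
  | zero =>
    intro t
    by_cases ht : t ∈ T
    · simp [reachWithinProb_of_mem ht]
    · simp [reachWithinProb_zero_of_notMem ht]
  | succ n ih =>
    intro t
    by_cases ht : t ∈ T
    · simp [reachWithinProb_of_mem ht]
    · simp_rw [reachWithinProb_succ_of_notMem ht]
      gcongr with u
      exact ih u

lemma reachProb_of_mem {t : S} (ht : t ∈ T) : reachProb p T t = 1 := by
  simp [reachProb, reachWithinProb_of_mem ht]

lemma reachProb_of_notMem {t : S} (ht : t ∉ T) :
    reachProb p T t = ∑' u, p t u * reachProb p T u := by
  have hmono : Monotone fun n u ↦ p t u * reachWithinProb p T n u :=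
    fun _ _ hmn u ↦ mul_le_mul_right (monotone_reachWithinProb hmn u) _
  calc reachProb p T t = ⨆ n, reachWithinProb p T (n + 1) t :=
        (Monotone.iSup_nat_add (fun _ _ hmn ↦ monotone_reachWithinProb hmn t) 1).symm
    _ = ⨆ n, ∑' u, p t u * reachWithinProb p T n u := by
        simp_rw [reachWithinProb_succ_of_notMem ht]
    _ = ∑' u, p t u * reachProb p T u := by
        simp_rw [← tsum_iSup_of_monotone hmono, ← ENNReal.mul_iSup, reachProb]

lemma reachProb_le_one (t : S) : reachProb p T t ≤ 1 := by
  refine iSup_le fun n ↦ ?_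
  rw [reachWithinProb, PMF.toOuterMeasure_apply, ← (pathPMF p n t).tsum_coe]
  exact ENNReal.tsum_le_tsum fun w ↦ Set.indicator_le_self _ _ w

lemma exists_reflTransGen_stepOff_of_reachWithinProb_ne_zero {n : ℕ} {t : S}
    (hn : reachWithinProb p T n t ≠ 0) : ∃ u ∈ T, ReflTransGen (StepOff p T) t u := by
  induction n generalizing t with
  | zero => exact ⟨t, by_contra fun htT ↦ hn (reachWithinProb_zero_of_notMem htT), .refl⟩
  | succ n ih =>
    by_cases htT : t ∈ T
    · exact ⟨t, htT, .refl⟩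
    rw [reachWithinProb_succ_of_notMem htT, ne_eq, ENNReal.tsum_eq_zero, not_forall] at hn
    obtain ⟨v, hv⟩ := hn
    obtain ⟨u, hu, hvu⟩ := ih (right_ne_zero_of_mul hv)
    exact ⟨u, hu, hvu.head ⟨htT, left_ne_zero_of_mul hv⟩⟩

lemma exists_reflTransGen_stepOff_of_reachProb_ne_zero {t : S} (ht : reachProb p T t ≠ 0) :
    ∃ u ∈ T, ReflTransGen (StepOff p T) t u := by
  obtain ⟨n, hn⟩ : ∃ n, reachWithinProb p T n t ≠ 0 := by
    simpa only [reachProb, ne_eq, ENNReal.iSup_eq_zero, not_forall] using ht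
  exact exists_reflTransGen_stepOff_of_reachWithinProb_ne_zero hn

lemma reachProb_eq_of_stepOff_of_forall_le {t u : S} (htu : StepOff p T t u)
    (hmin : ∀ v, StepOff p T t v → reachProb p T t ≤ reachProb p T v) :
    reachProb p T u = reachProb p T t := by
  refine (eq_of_tsum_pmf_mul_le (p t) (f := fun _ ↦ reachProb p T t)
    (fun v hv ↦ hmin v ⟨htu.1, hv⟩) ?_ ?_ htu.2).symm
  · rw [tsum_pmf_mul_const]
    exact ne_top_of_le_ne_top ENNReal.one_ne_top (reachProb_le_one t)
  · rw [tsum_pmf_mul_const, ← reachProb_of_notMem htu.1]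

lemma reachProb_eq_one_of_stepOff {t u : S} (ht : reachProb p T t = 1) (htu : StepOff p T t u) :
    reachProb p T u = 1 := by
  have hsum := reachProb_of_notMem (p := p) htu.1
  rw [ht] at hsum
  refine eq_of_tsum_pmf_mul_le (p t) (g := fun _ ↦ 1) (fun v _ ↦ reachProb_le_one v) ?_ ?_ htu.2
  · rw [← hsum]
    exact ENNReal.one_ne_top
  · rw [tsum_pmf_mul_const, hsum]

lemma reachProb_eq_one_of_reflTransGen {t u : S} (ht : reachProb p T t = 1)
    (htu : ReflTransGen (StepOff p T) t u) : reachProb p T u = 1 := by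
  induction htu with
  | refl => exact ht
  | tail _ hstep ih => exact reachProb_eq_one_of_stepOff ih hstep

lemma reachProb_eq_one_of_forall_exists_reflTransGen {s : S}
    (hfin : {t | ReflTransGen (StepOff p T) s t}.Finite)
    (hreach : ∀ t, ReflTransGen (StepOff p T) s t → ∃ u ∈ T, ReflTransGen (StepOff p T) t u) :
    reachProb p T s = 1 := by
  obtain ⟨t, hst, hmin⟩ := Set.exists_min_image _ (reachProb p T) hfin ⟨s, .refl⟩
  obtain ⟨u, huT, htu⟩ := hreach t hst
  have hconst : ∀ v, ReflTransGen (StepOff p T) t v → reachProb p T v = reachProb p T t := by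
    intro v htv
    induction htv with
    | refl => rfl
    | @tail v w htv hvw ih =>
      rw [← ih]
      exact reachProb_eq_of_stepOff_of_forall_le hvw fun x hvx ↦
        ih.trans_le (hmin x ((hst.trans htv).tail hvx))
  refine (reachProb_le_one s).antisymm ?_
  rw [← reachProb_of_mem huT, hconst u htu]
  exact hmin s .refl

theorem reachProb_eq_one_iff {s : S} (hfin : {t | ReflTransGen (StepOff p T) s t}.Finite) :
    reachProb p T s = 1 ↔
      ∀ t, ReflTransGen (StepOff p T) s t → ∃ u ∈ T, ReflTransGen (StepOff p T) t u := by
  refine ⟨fun hs t hst ↦ exists_reflTransGen_stepOff_of_reachProb_ne_zero ?_,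
    reachProb_eq_one_of_forall_exists_reflTransGen hfin⟩
  rw [reachProb_eq_one_of_reflTransGen hs hst]
  exact one_ne_zero

lemma stepOff_congr {q : S → PMF S} (hsupp : ∀ t ∉ T, (q t).support = (p t).support) :
    StepOff q T = StepOff p T := by
  funext t u
  exact propext (and_congr_right fun ht ↦ by rw [hsupp t ht])

end Chain

namespace IsMarkovTraj

variable {S : Type*} [MeasurableSpace S] [MeasurableSingletonClass S] {p : S → PMF S} {s : S}
  {μ : Measure (ℕ → S)} {T : Set S}

lemma map_eq_toMeasure_pathPMF (h : IsMarkovTraj p s μ) (n : ℕ) :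
    μ.map (fun ω (i : Fin (n + 1)) ↦ ω i) = (pathPMF p n s).toMeasure := by
  have hmeas : Measurable fun (ω : ℕ → S) (i : Fin (n + 1)) ↦ ω i := by fun_prop
  have := h.1
  have := Measure.isProbabilityMeasure_map (μ := μ) hmeas.aemeasurable
  refine measure_eq_toMeasure_of_singleton fun w ↦ ?_
  rw [Measure.map_apply hmeas (measurableSet_singleton w), pathPMF_apply, ← h.2 n w]
  simp only [Set.preimage, Set.mem_singleton_iff, funext_iff]

lemma measure_reach_within (h : IsMarkovTraj p s μ) (hT : MeasurableSet T) (n : ℕ) :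
    μ {ω | ∃ i : Fin (n + 1), ω i ∈ T} = reachWithinProb p T n s := by
  have hmeas : MeasurableSet {w : Fin (n + 1) → S | ∃ i, w i ∈ T} := by
    rw [Set.ofPred_exists]
    exact MeasurableSet.iUnion fun i ↦ measurable_pi_apply i hT
  rw [reachWithinProb, ← PMF.toMeasure_apply_eq_toOuterMeasure_apply _ hmeas,
    ← h.map_eq_toMeasure_pathPMF, Measure.map_apply (by fun_prop) hmeas]
  rfl

lemma measure_reach (h : IsMarkovTraj p s μ) (hT : MeasurableSet T) :
    μ {ω | ∃ n, ω n ∈ T} = reachProb p T s := by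
  have hunion : {ω : ℕ → S | ∃ n, ω n ∈ T} = ⋃ n : ℕ, {ω | ∃ i : Fin (n + 1), ω i ∈ T} := by
    ext ω
    simp only [Set.mem_ofPred_eq, Set.mem_iUnion]
    exact ⟨fun ⟨n, hn⟩ ↦ ⟨n, Fin.last n, hn⟩, fun ⟨_, i, hi⟩ ↦ ⟨i, hi⟩⟩
  have hmono : Monotone fun n : ℕ ↦ {ω : ℕ → S | ∃ i : Fin (n + 1), ω i ∈ T} :=
    fun _ _ hmn _ ⟨i, hi⟩ ↦ ⟨i.castLE (by lia), hi⟩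
  simp_rw [hunion, hmono.measure_iUnion, h.measure_reach_within hT, reachProb]

end IsMarkovTraj

theorem markov_reach_ae_iff_of_support_eq_general
    {S : Type*} [MeasurableSpace S] [MeasurableSingletonClass S] {p q : S → PMF S} {s : S}
    {T : Set S} (hT : MeasurableSet T) (hsupp : ∀ t ∉ T, (q t).support = (p t).support)
    (hfin : {t | ReflTransGen (StepOff p T) s t}.Finite) {μ ν : Measure (ℕ → S)}
    (hμ : IsMarkovTraj p s μ) (hν : IsMarkovTraj q s ν) :
    μ {ω | ∃ n, ω n ∈ T} = 1 ↔ ν {ω | ∃ n, ω n ∈ T} = 1 := by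
  have hstep := stepOff_congr hsupp
  rw [hμ.measure_reach hT, hν.measure_reach hT, reachProb_eq_one_iff hfin,
    reachProb_eq_one_iff (hstep ▸ hfin), hstep]

/-- Almost-sure reachability in a finite-state Markov chain depends only on the supports of
the transition distributions. -/
theorem markov_reach_ae_iff_of_support_eq
    {S : Type*} [Fintype S] [Nonempty S] [MeasurableSpace S] [DiscreteMeasurableSpace S]
    (p q : S → PMF S) (hsupp : ∀ s, (q s).support = (p s).support)
    (μp μq : S → Measure (ℕ → S))
    (hμp : ∀ s, IsMarkovTraj p s (μp s)) (hμq : ∀ s, IsMarkovTraj q s (μq s))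
    (s : S) (T : Set S) :
    μp s {ω | ∃ n, ω n ∈ T} = 1 ↔ μq s {ω | ∃ n, ω n ∈ T} = 1 :=
  markov_reach_ae_iff_of_support_eq_general .of_discrete (fun t _ ↦ hsupp t) (Set.toFinite _)
    (hμp s) (hμq s)
end

section
/- Let S be a finite nonempty type, p : S → PMF S a transition function, and for each state s let μ_{p,s} denote the Markov-chain trajectory measure on ℕ → S started at s. Define u : S → PMF S by letting u s be the uniform distribution on the (nonempty, finite) support of p s. Then for every start state s and target set T ⊆ S, μ_{p,s}(Reach(T)) = 1 if and only if μ_{u,s}(Reach(T)) = 1. (Instance of Lemma 1: replacing every transition distribution by the uniform distribution over its support preserves almost-sure reachability.) -/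
open MeasureTheory
open scoped Classical

/-- The transition function obtained from `p` by replacing each transition distribution by
the uniform distribution over its support. -/
noncomputable def uniformizeSupport {S : Type*} [Fintype S] (p : S → PMF S) : S → PMF S :=
  fun s => PMF.uniformOfFinset (p s).support.toFinset
    (Set.toFinset_nonempty.mpr (p s).support_nonempty)

/-!
Let `h x` be the probability that the chain started at `x` never visits `T`. Outside `T`, `h` is
harmonic. Nonnegativity and the maximum principle therefore show that `h s = 0` exactly when `T`
stays accessible along every path from `s` which has not yet met `T`: a state from which `T` is
inaccessible has `h = 1`, and a positive maximum of `h` would propagate along a path into `T`, where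
`h = 0`. This accessibility condition only mentions the supports of the transition distributions.
-/

open Filter Topology Matrix Relation

/-- One step of a path that is stopped on entering `T`, where `succ x` is the set of possible
successors of `x`. -/
def StepOutside {S : Type*} (succ : S → Set S) (T : Set S) (x y : S) : Prop :=
  x ∉ T ∧ y ∈ succ x

/-- `T` can be reached from every state that a path from `s` stopped on entering `T` can visit:
the combinatorial counterpart of reaching `T` almost surely from `s`. -/
def AlwaysCanReach {S : Type*} (succ : S → Set S) (T : Set S) (s : S) : Prop :=
  ∀ y, ReflTransGen (StepOutside succ T) s y → ∃ t ∈ T, ReflTransGen (StepOutside succ T) y t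

lemma alwaysCanReach_congr {S : Type*} {succ succ' : S → Set S} {T : Set S}
    (h : ∀ x ∉ T, succ x = succ' x) (s : S) :
    AlwaysCanReach succ T s ↔ AlwaysCanReach succ' T s := by
  have hstep : StepOutside succ T = StepOutside succ' T := by
    ext x y
    exact and_congr_right fun hx => by rw [h x hx]
  rw [AlwaysCanReach, AlwaysCanReach, hstep]

lemma eq_of_le_sum_mul {ι : Type*} [Fintype ι] {w f : ι → ℝ} {M : ℝ} (hw : ∀ i, 0 ≤ w i)
    (hw_sum : ∑ i, w i = 1) (hf : ∀ i, w i ≠ 0 → f i ≤ M) (hM : M ≤ ∑ i, w i * f i) {i : ι}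
    (hi : w i ≠ 0) : f i = M := by
  have hle : ∀ j ∈ Finset.univ, w j * f j ≤ w j * M := fun j _ => by
    by_cases hj : w j = 0
    · simp [hj]
    · exact mul_le_mul_of_nonneg_left (hf j hj) (hw j)
  have hsum : ∑ j, w j * f j = ∑ j, w j * M :=
    (Finset.sum_le_sum hle).antisymm (by rwa [← Finset.sum_mul, hw_sum, one_mul])
  exact mul_left_cancel₀ hi ((Finset.sum_eq_sum_iff_of_le hle).1 hsum i (Finset.mem_univ i))

/-- The probability that a chain with transition matrix `P`, started at a given state, avoids `T`
up to and including time `n`. It is computed by conditioning on the first step. -/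
noncomputable def avoidProb {S : Type*} [Fintype S] (P : Matrix S S ℝ) (T : Set S) : ℕ → S → ℝ
  | 0 => Tᶜ.indicator 1
  | n + 1 => Tᶜ.indicator (P *ᵥ avoidProb P T n)

/-- The probability that a chain with transition matrix `P` started at `s` never visits `T`, as the
limit of the decreasing sequence `avoidProb P T n s`. -/
noncomputable def escapeProb {S : Type*} [Fintype S] (P : Matrix S S ℝ) (T : Set S) (s : S) : ℝ :=
  ⨅ n, avoidProb P T n s

section TransitionMatrix

variable {S : Type*} [Fintype S] {P : Matrix S S ℝ} {T A : Set S} {s x y : S}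

lemma avoidProb_of_mem (hs : s ∈ T) (n : ℕ) : avoidProb P T n s = 0 := by
  cases n <;> simp [avoidProb, hs]

lemma avoidProb_nonneg (hP : ∀ x y, 0 ≤ P x y) (n : ℕ) : 0 ≤ avoidProb P T n := by
  induction n with
  | zero => exact Set.indicator_nonneg fun _ _ => zero_le_one
  | succ n ih => exact Set.indicator_nonneg fun x _ => dotProduct_nonneg_of_nonneg (hP x) ih

lemma avoidProb_antitone (hP : P ∈ rowStochastic ℝ S) : Antitone (avoidProb P T) := by
  refine antitone_nat_of_succ_le fun n => ?_
  induction n with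
  | zero =>
    refine fun x => Set.indicator_le_indicator ?_
    calc (P *ᵥ Tᶜ.indicator 1) x ≤ (P *ᵥ 1) x :=
          dotProduct_le_dotProduct_of_nonneg_left
            (Set.indicator_le_self' fun _ _ => zero_le_one) (hP.1 x)
      _ = 1 := by rw [hP.2, Pi.one_apply]
  | succ n ih =>
    exact fun x => Set.indicator_le_indicator <|
      dotProduct_le_dotProduct_of_nonneg_left ih (hP.1 x)

lemma tendsto_avoidProb (hP : P ∈ rowStochastic ℝ S) (s : S) :
    Tendsto (fun n => avoidProb P T n s) atTop (𝓝 (escapeProb P T s)) :=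
  tendsto_atTop_ciInf (fun _ _ hmn => avoidProb_antitone hP hmn s)
    ⟨0, Set.forall_mem_range.2 fun n => avoidProb_nonneg hP.1 n s⟩

lemma escapeProb_of_mem (hs : s ∈ T) : escapeProb P T s = 0 := by
  simp [escapeProb, avoidProb_of_mem hs]

lemma escapeProb_nonneg (hP : ∀ x y, 0 ≤ P x y) (s : S) : 0 ≤ escapeProb P T s :=
  Real.iInf_nonneg fun n => avoidProb_nonneg hP n s

lemma escapeProb_eq_sum (hP : P ∈ rowStochastic ℝ S) (hs : s ∉ T) :
    escapeProb P T s = ∑ t, P s t * escapeProb P T t := by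
  refine tendsto_nhds_unique ((tendsto_avoidProb hP s).comp (tendsto_add_atTop_nat 1)) ?_
  simp only [Function.comp_def, avoidProb, Set.indicator_of_mem (Set.mem_compl hs), mulVec,
    dotProduct]
  exact tendsto_finsetSum _ fun t _ => (tendsto_avoidProb hP t).const_mul _

lemma avoidProb_eq_one_of_closed (hP : ∀ x, ∑ y, P x y = 1) (hAT : Disjoint A T)
    (hA : ∀ x ∈ A, Function.support (P x) ⊆ A) (n : ℕ) (hx : x ∈ A) : avoidProb P T n x = 1 := by
  have hxT : ∀ {x}, x ∈ A → x ∈ Tᶜ := fun hx => Set.disjoint_left.1 hAT hx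
  induction n generalizing x with
  | zero => simp [avoidProb, hxT hx]
  | succ n ih =>
    calc avoidProb P T (n + 1) x = ∑ y, P x y * avoidProb P T n y :=
          Set.indicator_of_mem (hxT hx) _
      _ = ∑ y, P x y := Finset.sum_congr rfl fun y _ => by
          by_cases hy : P x y = 0
          · rw [hy, zero_mul]
          · rw [ih (hA x hx hy), mul_one]
      _ = 1 := hP x

lemma escapeProb_eq_one_of_not_reachable (hP : ∀ x, ∑ y, P x y = 1)
    (hs : ∀ t ∈ T, ¬ ReflTransGen (StepOutside (fun x => Function.support (P x)) T) s t) :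
    escapeProb P T s = 1 := by
  have hdisj :
      Disjoint {y | ReflTransGen (StepOutside (fun x => Function.support (P x)) T) s y} T :=
    Set.disjoint_left.2 fun y hy hyT => hs y hyT hy
  have hone (n : ℕ) : avoidProb P T n s = 1 :=
    avoidProb_eq_one_of_closed hP hdisj
      (fun x hx y hy => hx.tail ⟨Set.disjoint_left.1 hdisj hx, hy⟩) n ReflTransGen.refl
  simp [escapeProb, hone]

lemma escapeProb_eq_zero_of_reachable (hP : P ∈ rowStochastic ℝ S) (hx : escapeProb P T x = 0)
    (hxy : ReflTransGen (StepOutside (fun x => Function.support (P x)) T) x y) :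
    escapeProb P T y = 0 := by
  induction hxy with
  | refl => exact hx
  | @tail y z _ hyz hy =>
    rw [escapeProb_eq_sum hP hyz.1, Finset.sum_eq_zero_iff_of_nonneg fun t _ =>
      mul_nonneg (hP.1 y t) (escapeProb_nonneg hP.1 t)] at hy
    exact (mul_eq_zero.1 (hy z (Finset.mem_univ z))).resolve_left hyz.2

lemma escapeProb_eq_of_isMaxOn_reachable (hP : P ∈ rowStochastic ℝ S)
    (hx : IsMaxOn (escapeProb P T)
      {y | ReflTransGen (StepOutside (fun x => Function.support (P x)) T) x y} x)
    (hxy : ReflTransGen (StepOutside (fun x => Function.support (P x)) T) x y) :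
    escapeProb P T y = escapeProb P T x := by
  induction hxy with
  | refl => rfl
  | @tail y z hxy hyz hy =>
    exact eq_of_le_sum_mul (hP.1 y) (sum_row_of_mem_rowStochastic hP y)
      (fun t ht => hx (hxy.tail ⟨hyz.1, ht⟩)) (hy.ge.trans (escapeProb_eq_sum hP hyz.1).le) hyz.2

theorem escapeProb_eq_zero_iff (hP : P ∈ rowStochastic ℝ S) :
    escapeProb P T s = 0 ↔ AlwaysCanReach (fun x => Function.support (P x)) T s := by
  constructor
  · intro hs y hsy
    by_contra! hy
    have hone := escapeProb_eq_one_of_not_reachable (sum_row_of_mem_rowStochastic hP) hy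
    exact zero_ne_one ((escapeProb_eq_zero_of_reachable hP hs hsy).symm.trans hone)
  · intro hs
    obtain ⟨x, hsx, hmax⟩ := Set.exists_max_image
      {y | ReflTransGen (StepOutside (fun x => Function.support (P x)) T) s y} (escapeProb P T)
      (Set.toFinite _) ⟨s, ReflTransGen.refl⟩
    obtain ⟨t, htT, hxt⟩ := hs x hsx
    refine le_antisymm ?_ (escapeProb_nonneg hP.1 s)
    calc escapeProb P T s ≤ escapeProb P T x := hmax s ReflTransGen.refl
      _ = escapeProb P T t :=
          (escapeProb_eq_of_isMaxOn_reachable hP (fun y hxy => hmax y (hsx.trans hxy)) hxt).symm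
      _ = 0 := escapeProb_of_mem htT

lemma avoidProb_eq_sum_paths (n : ℕ) (s : S) :
    avoidProb P T n s = ∑ w : Fin (n + 1) → S with ∀ i, w i ∉ T,
      if w 0 = s then ∏ i : Fin n, P (w i.castSucc) (w i.succ) else 0 := by
  simp only [Finset.sum_filter]
  induction n generalizing s with
  | zero =>
    rw [← (Equiv.funUnique (Fin 1) S).symm.sum_comp, Finset.sum_eq_single s]
    · simp [avoidProb, Set.indicator_apply]
    · intro t _ hts
      simp [hts]
    · simp
  | succ n ih =>
    -- Split a path into its first state `t`, which must be `s`, and the remaining path `w`.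
    rw [← (Fin.consEquiv fun _ => S).sum_comp, Fintype.sum_prod_type, Finset.sum_eq_single s]
    · by_cases hs : s ∈ T
      · simp [avoidProb, hs, Fin.forall_fin_succ (n := n + 1), Fin.consEquiv]
      · simp only [avoidProb, Set.indicator_of_mem (Set.mem_compl hs), mulVec, dotProduct, ih,
          Finset.mul_sum]
        -- Only the transition from `s` to the first state `w 0` of `w` contributes.
        rw [Finset.sum_comm]
        refine Finset.sum_congr rfl fun w _ => ?_
        rw [Finset.sum_eq_single (w 0)]
        · simp [Fin.consEquiv, Fin.forall_fin_succ (n := n + 1), hs, Fin.prod_univ_succ]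
        · intro t _ ht
          simp [ht.symm]
        · simp
    · intro t _ hts
      simp [Fin.consEquiv, hts]
    · simp

end TransitionMatrix

/-- The transition function `p` as a matrix with real entries. -/
noncomputable def transitionMatrix {S : Type*} (p : S → PMF S) : Matrix S S ℝ :=
  Matrix.of fun x y => (p x y).toReal

lemma support_transitionMatrix {S : Type*} (p : S → PMF S) (x : S) :
    Function.support (transitionMatrix p x) = (p x).support := by
  ext y
  simp [transitionMatrix, ENNReal.toReal_eq_zero_iff, PMF.apply_ne_top, PMF.mem_support_iff]

lemma transitionMatrix_mem_rowStochastic {S : Type*} [Fintype S] (p : S → PMF S) :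
    transitionMatrix p ∈ rowStochastic ℝ S := by
  refine mem_rowStochastic_iff_sum.2 ⟨fun _ _ => ENNReal.toReal_nonneg, fun x => ?_⟩
  calc ∑ y, (p x y).toReal = (∑ y, p x y).toReal :=
        (ENNReal.toReal_sum fun y _ => (p x).apply_ne_top y).symm
    _ = 1 := by rw [← tsum_fintype (L := .unconditional _), (p x).tsum_coe, ENNReal.toReal_one]

section TrajectoryMeasure

variable {S : Type*} [MeasurableSpace S] {μ : Measure (ℕ → S)} {T : Set S}

lemma measurableSet_avoid_until (hT : MeasurableSet T) (n : ℕ) :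
    MeasurableSet {ω : ℕ → S | ∀ i ≤ n, ω i ∉ T} := by
  simp only [Set.ofPred_forall]
  exact .iInter fun i => .iInter fun _ => hT.compl.preimage (measurable_pi_apply i)

lemma tendsto_measureReal_avoid_until [IsFiniteMeasure μ] (hT : MeasurableSet T) :
    Tendsto (fun n => μ.real {ω | ∀ i ≤ n, ω i ∉ T}) atTop (𝓝 (μ.real {ω | ∀ n, ω n ∉ T})) := by
  have hinter : {ω : ℕ → S | ∀ n, ω n ∉ T} = ⋂ n, {ω | ∀ i ≤ n, ω i ∉ T} := by
    ext ω
    simp only [Set.mem_ofPred_eq, Set.mem_iInter]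
    exact ⟨fun h _ i _ => h i, fun h n => h n n le_rfl⟩
  rw [hinter]
  exact (ENNReal.tendsto_toReal (measure_ne_top _ _)).comp <|
    tendsto_measure_iInter_atTop (fun n => (measurableSet_avoid_until hT n).nullMeasurableSet)
      (fun _ _ hmn _ hω i hi => hω i (hi.trans hmn)) ⟨0, measure_ne_top _ _⟩

lemma prob_exists_mem_eq_one_iff [IsProbabilityMeasure μ] (hT : MeasurableSet T) :
    μ {ω | ∃ n, ω n ∈ T} = 1 ↔ μ.real {ω | ∀ n, ω n ∉ T} = 0 := by
  have hreach : MeasurableSet {ω : ℕ → S | ∃ n, ω n ∈ T} := by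
    simp only [Set.ofPred_exists]
    exact .iUnion fun i => hT.preimage (measurable_pi_apply i)
  rw [← prob_compl_eq_zero_iff hreach, measureReal_eq_zero_iff]
  simp only [Set.compl_ofPred, not_exists]

lemma measureReal_avoid_until_eq_sum_cylinders [Fintype S] [MeasurableSingletonClass S]
    [IsFiniteMeasure μ] (n : ℕ) :
    μ.real {ω | ∀ i ≤ n, ω i ∉ T} =
      ∑ w : Fin (n + 1) → S with ∀ i, w i ∉ T, μ.real {ω | ∀ i : Fin (n + 1), ω i = w i} := by
  have hunion : {ω : ℕ → S | ∀ i ≤ n, ω i ∉ T} =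
      ⋃ w ∈ Finset.univ.filter (fun w : Fin (n + 1) → S => ∀ i, w i ∉ T),
        {ω | ∀ i : Fin (n + 1), ω i = w i} := by
    ext ω
    simp only [Set.mem_ofPred_eq, Finset.mem_filter, Finset.mem_univ, true_and, Set.mem_iUnion,
      exists_prop]
    constructor
    · intro h
      exact ⟨fun i => ω i, fun i => h i (Nat.le_of_lt_succ i.2), fun _ => rfl⟩
    · rintro ⟨w, hw, hω⟩ i hi
      exact (hω ⟨i, Nat.lt_succ_of_le hi⟩).symm ▸ hw _
  rw [hunion, measureReal_biUnion_finset]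
  · intro w _ w' _ hne
    exact Set.disjoint_left.2 fun ω hω hω' => hne (funext fun i => (hω i).symm.trans (hω' i))
  · intro w _
    simp only [Set.ofPred_forall]
    exact .iInter fun i => (MeasurableSet.singleton (w i)).preimage (measurable_pi_apply (i : ℕ))

end TrajectoryMeasure

namespace IsMarkovTraj

variable {S : Type*} [MeasurableSpace S] [DiscreteMeasurableSpace S] {p : S → PMF S}
  {s : S} {μ : Measure (ℕ → S)}

lemma measureReal_avoid_until [Fintype S] (hμ : IsMarkovTraj p s μ) (T : Set S) (n : ℕ) :
    μ.real {ω | ∀ i ≤ n, ω i ∉ T} = avoidProb (transitionMatrix p) T n s := by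
  have := hμ.1
  rw [measureReal_avoid_until_eq_sum_cylinders, avoidProb_eq_sum_paths]
  refine Finset.sum_congr rfl fun w _ => ?_
  rw [measureReal_def, hμ.2 n w]
  split_ifs <;> simp [transitionMatrix, ENNReal.toReal_prod]

lemma measureReal_avoid [Fintype S] (hμ : IsMarkovTraj p s μ) (T : Set S) :
    μ.real {ω | ∀ n, ω n ∉ T} = escapeProb (transitionMatrix p) T s := by
  have := hμ.1
  refine tendsto_nhds_unique (tendsto_measureReal_avoid_until .of_discrete) ?_
  simpa only [hμ.measureReal_avoid_until] using
    tendsto_avoidProb (transitionMatrix_mem_rowStochastic p) s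

theorem reach_eq_one_iff [Finite S] (hμ : IsMarkovTraj p s μ) (T : Set S) :
    μ {ω | ∃ n, ω n ∈ T} = 1 ↔ AlwaysCanReach (fun x => (p x).support) T s := by
  have := hμ.1
  cases nonempty_fintype S
  simp only [← support_transitionMatrix]
  rw [prob_exists_mem_eq_one_iff .of_discrete, hμ.measureReal_avoid,
    escapeProb_eq_zero_iff (transitionMatrix_mem_rowStochastic p)]

end IsMarkovTraj

lemma support_uniformizeSupport {S : Type*} [Fintype S] (p : S → PMF S) (x : S) :
    (uniformizeSupport p x).support = (p x).support := by
  simp [uniformizeSupport]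

theorem markov_reach_ae_iff_uniformize_general
    {S : Type*} [Finite S] [MeasurableSpace S] [DiscreteMeasurableSpace S]
    {p q : S → PMF S} {s : S} {T : Set S} (hpq : ∀ x ∉ T, (p x).support = (q x).support)
    {μ ν : Measure (ℕ → S)} (hμ : IsMarkovTraj p s μ) (hν : IsMarkovTraj q s ν) :
    μ {ω | ∃ n, ω n ∈ T} = 1 ↔ ν {ω | ∃ n, ω n ∈ T} = 1 := by
  rw [hμ.reach_eq_one_iff, hν.reach_eq_one_iff, alwaysCanReach_congr hpq]

/-- Replacing every transition distribution of a finite-state Markov chain by the uniform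
distribution over its support preserves almost-sure reachability. -/
theorem markov_reach_ae_iff_uniformize
    {S : Type*} [Fintype S] [Nonempty S] [MeasurableSpace S] [DiscreteMeasurableSpace S]
    (p : S → PMF S)
    (μp μu : S → Measure (ℕ → S))
    (hμp : ∀ s, IsMarkovTraj p s (μp s))
    (hμu : ∀ s, IsMarkovTraj (uniformizeSupport p) s (μu s))
    (s : S) (T : Set S) :
    μp s {ω | ∃ n, ω n ∈ T} = 1 ↔ μu s {ω | ∃ n, ω n ∈ T} = 1 :=
  markov_reach_ae_iff_uniformize_general (fun x _ => (support_uniformizeSupport p x).symm) (hμp s)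
    (hμu s)
end

section
/- Let S be a finite nonempty type, p : S → PMF S a transition function, and for each state s let μ_{p,s} denote the Markov-chain trajectory measure on ℕ → S started at s. Define the support graph on S by putting an edge from s to s' whenever p s assigns positive probability to s'. Then for every start state s and target set T ⊆ S, μ_{p,s}(Reach(T)) > 0 if and only if there exists a finite path s = s₀, s₁, …, s_j in the support graph with s_j ∈ T (i.e., T is reachable from s in the support graph). -/
open MeasureTheory
open scoped Classical

/-!
Finite prefixes of trajectories take only countably many values, so almost every trajectory has all
of its prefixes of positive probability and therefore moves along edges of the support graph. Hence
an event of positive probability contains a trajectory that follows the graph. Conversely, a path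
in the graph is a cylinder of positive probability.
-/

theorem ae_measure_preimage_singleton_pos {Ω ι : Type*} [MeasurableSpace Ω] [Countable ι]
    (μ : Measure Ω) (f : Ω → ι) : ∀ᵐ ω ∂μ, 0 < μ (f ⁻¹' {f ω}) := by
  have avoids_null_fibers : ∀ᵐ ω ∂μ, ∀ i, μ (f ⁻¹' {i}) = 0 → f ω ≠ i :=
    ae_all_iff.2 fun _ => Filter.eventually_imp_distrib_left.2 measure_eq_zero_iff_ae_notMem.1
  filter_upwards [avoids_null_fibers] with ω hω
  exact pos_iff_ne_zero.2 fun hnull => hω _ hnull rfl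

theorem exists_fin_path_of_reflTransGen {α : Type*} {r : α → α → Prop} {a b : α}
    (h : Relation.ReflTransGen r a b) :
    ∃ (n : ℕ) (w : Fin (n + 1) → α),
      w 0 = a ∧ w (Fin.last n) = b ∧ ∀ i : Fin n, r (w i.castSucc) (w i.succ) := by
  induction h using Relation.ReflTransGen.head_induction_on with
  | refl => exact ⟨0, fun _ => b, rfl, rfl, Fin.elim0⟩
  | @head a c hac _ ih =>
    obtain ⟨n, w, rfl, hb, hw⟩ := ih
    exact ⟨n + 1, Fin.cons a w, rfl, hb, Fin.cases hac hw⟩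

namespace IsMarkovTraj

variable {S : Type*} [MeasurableSpace S] {p : S → PMF S} {s : S} {μ : Measure (ℕ → S)}

theorem measure_cylinder_pos_iff (hμ : IsMarkovTraj p s μ) {n : ℕ} {w : Fin (n + 1) → S} :
    0 < μ {ω | ∀ i : Fin (n + 1), ω i = w i} ↔
      w 0 = s ∧ ∀ i : Fin n, 0 < p (w i.castSucc) (w i.succ) := by
  rw [hμ.2 n w]
  split_ifs with h <;> simp [h, pos_iff_ne_zero, Finset.prod_eq_zero_iff]

theorem ae_follows_support [Countable S] (hμ : IsMarkovTraj p s μ) :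
    ∀ᵐ ω ∂μ, ω 0 = s ∧ ∀ n, 0 < p (ω n) (ω (n + 1)) := by
  have prefix_pos : ∀ᵐ ω ∂μ, ∀ n, 0 < μ {ω' | ∀ i : Fin (n + 1), ω' i = ω i} := by
    refine ae_all_iff.2 fun n => ?_
    simpa only [Set.preimage, Set.mem_singleton_iff, funext_iff] using
      ae_measure_preimage_singleton_pos μ fun ω (i : Fin (n + 1)) => ω i
  filter_upwards [prefix_pos] with ω hω
  have prefix_path n := (hμ.measure_cylinder_pos_iff (w := fun i => ω i)).1 (hω n)
  exact ⟨(prefix_path 0).1, fun n => (prefix_path (n + 1)).2 (Fin.last n)⟩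

theorem ae_reflTransGen_support [Countable S] (hμ : IsMarkovTraj p s μ) :
    ∀ᵐ ω ∂μ, ∀ n, Relation.ReflTransGen (fun a b => 0 < p a b) s (ω n) := by
  filter_upwards [hμ.ae_follows_support] with ω ⟨hstart, hstep⟩ n
  induction n with
  | zero => rw [hstart]
  | succ n ih => exact ih.tail (hstep n)

theorem exists_measure_eval_eq_pos (hμ : IsMarkovTraj p s μ) {t : S}
    (h : Relation.ReflTransGen (fun a b => 0 < p a b) s t) :
    ∃ n, 0 < μ {ω | ω n = t} := by
  obtain ⟨n, w, hstart, rfl, hstep⟩ := exists_fin_path_of_reflTransGen h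
  exact ⟨n, (hμ.measure_cylinder_pos_iff.2 ⟨hstart, hstep⟩).trans_le
    (measure_mono fun _ hω => hω (Fin.last n))⟩

end IsMarkovTraj

theorem markov_reach_pos_iff_support_graph_reach_general
    {S : Type*} [Countable S] [MeasurableSpace S]
    (p : S → PMF S) (s : S) (μ : Measure (ℕ → S)) (hμ : IsMarkovTraj p s μ) (T : Set S) :
    0 < μ {ω | ∃ n, ω n ∈ T} ↔
      ∃ t ∈ T, Relation.ReflTransGen (fun a b => 0 < p a b) s t := by
  constructor
  · intro hpos
    obtain ⟨ω, ⟨n, hn⟩, hω⟩ :=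
      ((frequently_ae_mem_iff.2 hpos.ne').and_eventually hμ.ae_reflTransGen_support).exists
    exact ⟨ω n, hn, hω n⟩
  · rintro ⟨t, ht, hst⟩
    obtain ⟨n, hn⟩ := hμ.exists_measure_eval_eq_pos hst
    exact hn.trans_le (measure_mono fun ω (hω : ω n = t) => ⟨n, hω ▸ ht⟩)

/-- Positive-probability reachability in a finite-state Markov chain is equivalent to
reachability of the target set in the support graph (the directed graph with an edge
`s → s'` iff `p s` assigns positive probability to `s'`). -/
theorem markov_reach_pos_iff_support_graph_reach
    {S : Type*} [Fintype S] [Nonempty S] [MeasurableSpace S] [DiscreteMeasurableSpace S]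
    (p : S → PMF S) (s : S) (μ : Measure (ℕ → S)) (hμ : IsMarkovTraj p s μ)
    (T : Set S) :
    0 < μ {ω | ∃ n, ω n ∈ T} ↔
      ∃ t ∈ T, Relation.ReflTransGen (fun a b => 0 < p a b) s t :=
  markov_reach_pos_iff_support_graph_reach_general p s μ hμ T
end

section
/- Let S be a finite type and p : S → PMF S a transition function, with support graph having an edge s → s' whenever p s assigns positive probability to s'. If a set T ⊆ S is reachable from a state s in the support graph, then there is a path in the support graph from s to some state of T of length strictly less than the cardinality of S; consequently the probability, under the Markov chain with transitions p started at s, that some state of T is visited within the first (card S) steps is positive. (Bounded-length path property used to justify the bound k = |S|·|M| in the paper's SAT encoding, via Lemma 2.) -/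
open MeasureTheory
open scoped Classical

/-!
A path that visits a state twice can be shortened by cutting out the loop, so the endpoints of any
path are joined by an injective one, which has fewer steps than there are reachable states. The
trajectories that follow this path form a cylinder whose measure is a product of positive transition
probabilities.
-/

section RelSeries

variable {α : Type*} {r : SetRel α α}

theorem exists_relSeries_length_lt_of_not_injective (x : RelSeries r)
    (hx : ¬ Function.Injective x) :
    ∃ y : RelSeries r, y.length < x.length ∧ y.head = x.head ∧ y.last = x.last := by
  obtain ⟨i, j, heq, hne⟩ := Function.not_injective_iff.mp hx
  wlog hij : i < j generalizing i j
  · exact this j i heq.symm hne.symm (hne.symm.lt_of_le (not_lt.mp hij))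
  have hconn : (x.take i).last = (x.drop j).head := by simpa using heq
  refine ⟨(x.take i).smash (x.drop j) hconn, ?_, by simp, by simp⟩
  simp only [RelSeries.smash_length, RelSeries.take_length, RelSeries.drop_length]
  omega

theorem exists_injective_relSeries (x : RelSeries r) :
    ∃ y : RelSeries r, Function.Injective y ∧ y.head = x.head ∧ y.last = x.last := by
  induction hn : x.length using Nat.strong_induction_on generalizing x with
  | _ n ih =>
    by_cases hx : Function.Injective x
    · exact ⟨x, hx, rfl, rfl⟩
    obtain ⟨y, hlt, hhead, hlast⟩ := exists_relSeries_length_lt_of_not_injective x hx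
    obtain ⟨z, hz, hzhead, hzlast⟩ := ih y.length (hn ▸ hlt) y rfl
    exact ⟨z, hz, hzhead.trans hhead, hzlast.trans hlast⟩

theorem reflTransGen_head_apply (x : RelSeries r) (i : Fin (x.length + 1)) :
    Relation.ReflTransGen (fun a b => (a, b) ∈ r) x.head (x i) := by
  induction i using Fin.induction with
  | zero => exact .refl
  | succ i ih => exact ih.tail (x.step i)

theorem length_lt_encard_reflTransGen_head {x : RelSeries r} (hx : Function.Injective x) :
    (x.length : ℕ∞) < {a | Relation.ReflTransGen (fun a b => (a, b) ∈ r) x.head a}.encard := by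
  rw [← ENat.add_one_le_iff (ENat.natCast_ne_top _)]
  calc (x.length : ℕ∞) + 1 = ENat.card (Fin (x.length + 1)) := by simp
    _ ≤ (Set.range x).encard := hx.encard_range
    _ ≤ _ := Set.encard_le_encard (Set.range_subset_iff.mpr (reflTransGen_head_apply x))

theorem exists_relSeries_length_eq_iff {j : ℕ} {s : α} {T : Set α} :
    (∃ x : RelSeries r, x.length = j ∧ x.head = s ∧ x.last ∈ T) ↔
      ∃ w : ℕ → α, w 0 = s ∧ (∀ i < j, (w i, w (i + 1)) ∈ r) ∧ w j ∈ T := by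
  constructor
  · rintro ⟨x, rfl, rfl, hT⟩
    refine ⟨fun i => x (Fin.ofNat _ i), rfl, fun i hi => ?_, ?_⟩
    · have hcur : Fin.ofNat (x.length + 1) i = Fin.castSucc ⟨i, hi⟩ :=
        Fin.ext (Nat.mod_eq_of_lt (by omega))
      have hnext : Fin.ofNat (x.length + 1) (i + 1) = Fin.succ ⟨i, hi⟩ :=
        Fin.ext (Nat.mod_eq_of_lt (by omega))
      simpa only [hcur, hnext] using x.step ⟨i, hi⟩
    · beta_reduce
      rwa [Fin.ofNat_eq_cast, Fin.natCast_eq_last, x.apply_last]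
  · rintro ⟨w, rfl, hw, hT⟩
    exact ⟨⟨j, fun i => w i, fun i => hw i i.isLt⟩, rfl, rfl, hT⟩

end RelSeries

/-- The support graph of a transition function `p`. Encoding it as a `SetRel` makes its paths the
terms of `RelSeries (supportGraph p)`. -/
def supportGraph {S : Type*} (p : S → PMF S) : SetRel S S :=
  {(a, b) | 0 < p a b}

namespace IsMarkovTraj

variable {S : Type*} [MeasurableSpace S] {p : S → PMF S} {s : S} {μ : Measure (ℕ → S)}

theorem measure_cylinder_pos (hμ : IsMarkovTraj p s μ) (x : RelSeries (supportGraph p))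
    (hx : x.head = s) : 0 < μ {ω | ∀ i : Fin (x.length + 1), ω i = x i} := by
  rw [hμ.2 x.length x, x.apply_zero, if_pos hx, pos_iff_ne_zero, Finset.prod_ne_zero_iff]
  exact fun i _ => (x.step i).ne'

theorem measure_apply_length_mem_pos (hμ : IsMarkovTraj p s μ) (x : RelSeries (supportGraph p))
    (hx : x.head = s) {T : Set S} (hT : x.last ∈ T) : 0 < μ {ω | ω x.length ∈ T} := by
  refine (hμ.measure_cylinder_pos x hx).trans_le (measure_mono fun ω hω => ?_)
  have hlast : ω x.length = x.last := hω (Fin.last _)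
  rwa [Set.mem_ofPred_eq, hlast]

end IsMarkovTraj

theorem support_graph_reach_bounded_and_pos_general
    {S : Type*} [MeasurableSpace S] (p : S → PMF S) (s : S) (T : Set S)
    (μ : Measure (ℕ → S)) (hμ : IsMarkovTraj p s μ)
    (h : ∃ j, ∃ w : ℕ → S, w 0 = s ∧ (∀ i < j, 0 < p (w i) (w (i + 1))) ∧ w j ∈ T) :
    ∃ j : ℕ, (j : ℕ∞) < {a | Relation.ReflTransGen (fun a b => 0 < p a b) s a}.encard ∧
      (∃ w : ℕ → S, w 0 = s ∧ (∀ i < j, 0 < p (w i) (w (i + 1))) ∧ w j ∈ T) ∧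
      0 < μ {ω | ω j ∈ T} := by
  obtain ⟨j, hw⟩ := h
  obtain ⟨x, -, rfl, hT⟩ := (exists_relSeries_length_eq_iff (r := supportGraph p)).mpr hw
  obtain ⟨y, hy, hhead, hlast⟩ := exists_injective_relSeries x
  rw [← hlast] at hT
  rw [← hhead]
  exact ⟨y.length, length_lt_encard_reflTransGen_head hy,
    exists_relSeries_length_eq_iff.mp ⟨y, rfl, rfl, hT⟩,
    hμ.measure_apply_length_mem_pos y hhead hT⟩

/-- If the target set `T` is reachable from `s` in the support graph of `p`, then it is
reachable by a path of length strictly less than `card S`; consequently the Markov chain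
with transitions `p` started at `s` visits `T` within the first `card S` steps with
positive probability. -/
theorem support_graph_reach_bounded_and_pos
    {S : Type*} [Fintype S] [MeasurableSpace S] [DiscreteMeasurableSpace S]
    (p : S → PMF S) (s : S) (T : Set S)
    (μ : Measure (ℕ → S)) (hμ : IsMarkovTraj p s μ)
    (h : ∃ j, ∃ w : ℕ → S, w 0 = s ∧ (∀ i < j, 0 < p (w i) (w (i + 1))) ∧ w j ∈ T) :
    (∃ j < Fintype.card S, ∃ w : ℕ → S,
        w 0 = s ∧ (∀ i < j, 0 < p (w i) (w (i + 1))) ∧ w j ∈ T) ∧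
      0 < μ {ω | ∃ k ≤ Fintype.card S, ω k ∈ T} := by
  obtain ⟨j, hj, hpath, hpos⟩ := support_graph_reach_bounded_and_pos_general p s T μ hμ h
  have hcard : j < Fintype.card S := by simpa using hj.trans_le Set.encard_le_card
  exact ⟨⟨j, hcard, hpath⟩, hpos.trans_le (measure_mono fun ω hω => ⟨j, hcard.le, hω⟩)⟩
end

section
/- Let S be a finite nonempty type, p : S → PMF S a transition function, and for each state s let μ_{p,s} denote the Markov-chain trajectory measure on ℕ → S started at s. Define the support graph on S by putting an edge from s to s' whenever p s assigns positive probability to s'. Fix a start state s and a target set T ⊆ S. If for every state t reachable from s in the support graph one has μ_{p,t}(Reach(T)) > 0, then μ_{p,s}(Reach(T)) = 1. (Zero–one principle for qualitative reachability in finite Markov chains, underlying the correctness of the paper's qualitative analysis.) -/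
open MeasureTheory
open scoped Classical

/-!
Let `q t` be the probability that the chain started at `t` stays in `A = Tᶜ` forever, and suppose
that `q ≤ c < 1` on the states reachable from `s`; for finite `S` such a `c` exists because the
hitting probabilities attain their minimum. By the Markov property at the first step, `q` is
harmonic on `A`, so by induction on `n` the bound improves to
`q t ≤ c * ℙ_t (the chain stays in A before time n)`. Letting `n → ∞` gives `q s ≤ c * q s`, hence
`q s = 0`.
-/

open Filter
open scoped ENNReal Topology

theorem measure_ext_of_initial_segments {X : ℕ → Type*} [∀ n, Countable (X n)]
    [∀ n, MeasurableSpace (X n)] [∀ n, MeasurableSingletonClass (X n)]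
    {μ ν : Measure ((n : ℕ) → X n)} [IsFiniteMeasure μ]
    (h : ∀ (n : ℕ) (w : (i : Fin (n + 1)) → X i),
      μ {ω | ∀ i : Fin (n + 1), ω i = w i} = ν {ω | ∀ i : Fin (n + 1), ω i = w i}) :
    μ = ν := by
  have hμ : IsProjectiveLimit μ fun I => μ.map I.restrict := fun _ => rfl
  have hfamily : IsProjectiveMeasureFamily fun I : Finset ℕ => μ.map I.restrict :=
    ProbabilityTheory.isProjectiveMeasureFamily_map_restrict fun n =>
      (measurable_pi_apply n).aemeasurable
  refine hμ.unique ((isProjectiveLimit_nat_iff hfamily ν).2 fun n =>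
    Measure.ext_of_singleton fun w => ?_)
  have preimage_singleton : (Finset.Iic n).restrict ⁻¹' {w} =
      {ω : (n : ℕ) → X n | ∀ i : Fin (n + 1), ω i = w ⟨i, Finset.mem_Iic.2 i.is_le⟩} := by
    ext ω
    simp [funext_iff, Fin.forall_iff]
  have hrestrict := Finset.measurable_restrict (X := X) (Finset.Iic n)
  rw [Preorder.frestrictLe, Measure.map_apply hrestrict (measurableSet_singleton w),
    Measure.map_apply hrestrict (measurableSet_singleton w), preimage_singleton, h]

namespace IsMarkovTraj

variable {S : Type*} [MeasurableSpace S] [MeasurableSingletonClass S] {p : S → PMF S}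

theorem ae_eval_zero_eq {t : S} {ν : Measure (ℕ → S)}
    (hν : IsMarkovTraj p t ν) : ∀ᵐ ω ∂ν, ω 0 = t := by
  have := hν.1
  have hmeas : MeasurableSet {ω : ℕ → S | ω 0 = t} :=
    (measurableSet_singleton t).preimage (measurable_pi_apply 0)
  refine (mem_ae_iff_prob_eq_one hmeas).2 ?_
  simpa using hν.2 0 fun _ => t

theorem measure_forall_mem_eq_zero_of_notMem {t : S} {ν : Measure (ℕ → S)}
    (hν : IsMarkovTraj p t ν) {A : Set S} (ht : t ∉ A) : ν {ω | ∀ n, ω n ∈ A} = 0 := by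
  rw [measure_eq_zero_iff_ae_notMem]
  filter_upwards [hν.ae_eval_zero_eq] with ω h0 hω
  exact ht (h0 ▸ hω 0)

variable [Countable S] {μ : S → Measure (ℕ → S)} (hμ : ∀ t, IsMarkovTraj p t (μ t)) {A : Set S}
include hμ

theorem map_shift (t : S) :
    (μ t).map (fun ω n => ω (n + 1)) = Measure.sum fun u => p t u • μ u := by
  have := (hμ t).1
  have hshift : Measurable fun (ω : ℕ → S) n => ω (n + 1) := by fun_prop
  refine measure_ext_of_initial_segments fun n w => ?_
  have hmeas : MeasurableSet {ω : ℕ → S | ∀ i : Fin (n + 1), ω i = w i} := by measurability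
  calc (μ t).map (fun ω n => ω (n + 1)) {ω | ∀ i : Fin (n + 1), ω i = w i}
      = μ t {ω | ∀ i : Fin (n + 1), ω (i + 1) = w i} := Measure.map_apply hshift hmeas
    _ = μ t {ω | ∀ i : Fin (n + 2), ω i = Fin.cons (α := fun _ => S) t w i} := by
      refine measure_congr (eventuallyEq_set.2 ?_)
      filter_upwards [(hμ t).ae_eval_zero_eq] with ω hω
      simp [Fin.forall_fin_succ (n := n + 1), hω]
    _ = p t (w 0) * ∏ i : Fin n, p (w i.castSucc) (w i.succ) := by
      rw [(hμ t).2]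
      simp [Fin.prod_univ_succ (n := n)]
    _ = ∑' u, p t u * μ u {ω | ∀ i : Fin (n + 1), ω i = w i} := by
      rw [tsum_eq_single (w 0)]
      · simp [(hμ _).2]
      · intro u hu
        simp [(hμ u).2, hu.symm]
    _ = Measure.sum (fun u => p t u • μ u) {ω | ∀ i : Fin (n + 1), ω i = w i} := by
      simp [Measure.sum_apply _ hmeas]

theorem measure_mem_and_shift_mem {t : S} (ht : t ∈ A) {E : Set (ℕ → S)}
    (hE : MeasurableSet E) :
    μ t {ω | ω 0 ∈ A ∧ (fun n => ω (n + 1)) ∈ E} = ∑' u, p t u * μ u E := by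
  have hshift : Measurable fun (ω : ℕ → S) n => ω (n + 1) := by fun_prop
  calc μ t {ω | ω 0 ∈ A ∧ (fun n => ω (n + 1)) ∈ E}
      = μ t ((fun ω n => ω (n + 1)) ⁻¹' E) := by
        refine measure_congr (eventuallyEq_set.2 ?_)
        filter_upwards [(hμ t).ae_eval_zero_eq] with ω hω
        simp [hω, ht]
    _ = ∑' u, p t u * μ u E := by
        rw [← Measure.map_apply hshift hE, map_shift hμ, Measure.sum_apply _ hE]
        simp

theorem measure_forall_mem_eq_tsum {t : S} (ht : t ∈ A) :
    μ t {ω | ∀ n, ω n ∈ A} = ∑' u, p t u * μ u {ω | ∀ n, ω n ∈ A} := by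
  rw [← measure_mem_and_shift_mem hμ ht (by measurability)]
  congr with ω
  exact Nat.and_forall_add_one.symm

theorem measure_forall_lt_succ_mem_eq_tsum {t : S} (ht : t ∈ A) (n : ℕ) :
    μ t {ω | ∀ k < n + 1, ω k ∈ A} = ∑' u, p t u * μ u {ω | ∀ k < n, ω k ∈ A} := by
  rw [← measure_mem_and_shift_mem hμ ht (by measurability)]
  congr with ω
  exact Nat.forall_lt_succ_left

variable {R : Set S} (hR : ∀ t ∈ R, ∀ u, 0 < p t u → u ∈ R) {c : ℝ≥0∞}
  (hc : ∀ t ∈ R, μ t {ω | ∀ n, ω n ∈ A} ≤ c)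
include hR hc

theorem measure_forall_mem_le_mul_forall_lt (n : ℕ) {t : S} (ht : t ∈ R) :
    μ t {ω | ∀ k, ω k ∈ A} ≤ c * μ t {ω | ∀ k < n, ω k ∈ A} := by
  induction n generalizing t with
  | zero =>
    have := (hμ t).1
    simpa using hc t ht
  | succ n ih =>
    by_cases htA : t ∈ A
    · calc μ t {ω | ∀ k, ω k ∈ A}
          = ∑' u, p t u * μ u {ω | ∀ k, ω k ∈ A} := measure_forall_mem_eq_tsum hμ htA
        _ ≤ ∑' u, p t u * (c * μ u {ω | ∀ k < n, ω k ∈ A}) := by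
          refine ENNReal.tsum_le_tsum fun u => ?_
          rcases eq_zero_or_pos (p t u) with hu | hu
          · simp [hu]
          · exact mul_le_mul_right (ih (hR t ht u hu)) _
        _ = c * μ t {ω | ∀ k < n + 1, ω k ∈ A} := by
          simp_rw [measure_forall_lt_succ_mem_eq_tsum hμ htA, mul_left_comm _ c,
            ENNReal.tsum_mul_left]
    · simp [(hμ t).measure_forall_mem_eq_zero_of_notMem htA]

theorem measure_forall_mem_eq_zero_of_lt_one (hc1 : c < 1) {t : S} (ht : t ∈ R) :
    μ t {ω | ∀ n, ω n ∈ A} = 0 := by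
  have := (hμ t).1
  have htendsto : Tendsto (fun n => μ t {ω | ∀ k ≤ n, ω k ∈ A}) atTop
      (𝓝 (μ t {ω | ∀ n, ω n ∈ A})) := by
    simpa only [Set.ofPred_forall] using tendsto_measure_iInter_le (μ := μ t)
      (f := fun n => {ω : ℕ → S | ω n ∈ A}) (fun n => by measurability) ⟨0, measure_ne_top _ _⟩
  have hle : μ t {ω | ∀ n, ω n ∈ A} ≤ c * μ t {ω | ∀ n, ω n ∈ A} :=
    ge_of_tendsto' (ENNReal.Tendsto.const_mul htendsto (.inr hc1.ne_top)) fun n => by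
      simpa only [Nat.lt_succ_iff] using measure_forall_mem_le_mul_forall_lt hμ hR hc (n + 1) ht
  by_contra hne
  exact hle.not_gt
    ((ENNReal.mul_lt_mul_left hne (measure_ne_top _ _) hc1).trans_eq (one_mul _))

end IsMarkovTraj

theorem markov_reach_ae_of_pos_from_reachable_general
    {S : Type*} [Countable S] [MeasurableSpace S] [MeasurableSingletonClass S]
    (p : S → PMF S)
    (μ : S → Measure (ℕ → S)) (hμ : ∀ t, IsMarkovTraj p t (μ t))
    (s : S) (T : Set S) {ε : ℝ≥0∞} (hε : 0 < ε)
    (h : ∀ t, Relation.ReflTransGen (fun a b => 0 < p a b) s t →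
      ε ≤ μ t {ω | ∃ n, ω n ∈ T}) :
    μ s {ω | ∃ n, ω n ∈ T} = 1 := by
  have (t : S) : IsProbabilityMeasure (μ t) := (hμ t).1
  have hmeas : MeasurableSet {ω : ℕ → S | ∃ n, ω n ∈ T} := by measurability
  have hcompl : {ω : ℕ → S | ∃ n, ω n ∈ T}ᶜ = {ω | ∀ n, ω n ∈ Tᶜ} := by
    ext ω
    simp
  rw [← prob_compl_eq_zero_iff hmeas, hcompl]
  refine IsMarkovTraj.measure_forall_mem_eq_zero_of_lt_one hμ
    (R := {t | Relation.ReflTransGen (fun a b => 0 < p a b) s t}) (c := 1 - ε)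
    (fun t ht u hu => ht.tail hu) (fun t ht => ?_)
    (ENNReal.sub_lt_self ENNReal.one_ne_top one_ne_zero hε.ne') .refl
  rw [← hcompl, prob_compl_eq_one_sub hmeas]
  exact tsub_le_tsub_left (h t ht) 1

/-- Zero–one principle for qualitative reachability in finite Markov chains: if from every
state reachable from `s` in the support graph the target set `T` is reached with positive
probability, then from `s` it is reached almost surely. -/
theorem markov_reach_ae_of_pos_from_reachable
    {S : Type*} [Fintype S] [Nonempty S] [MeasurableSpace S] [DiscreteMeasurableSpace S]
    (p : S → PMF S)
    (μ : S → Measure (ℕ → S)) (hμ : ∀ t, IsMarkovTraj p t (μ t))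
    (s : S) (T : Set S)
    (h : ∀ t, Relation.ReflTransGen (fun a b => 0 < p a b) s t →
      0 < μ t {ω | ∃ n, ω n ∈ T}) :
    μ s {ω | ∃ n, ω n ∈ T} = 1 := by
  obtain ⟨t, ht, hmin⟩ := Set.exists_min_image _ (fun t => μ t {ω | ∃ n, ω n ∈ T})
    (Set.toFinite {t | Relation.ReflTransGen (fun a b => 0 < p a b) s t}) ⟨s, .refl⟩
  exact markov_reach_ae_of_pos_from_reachable_general p μ hμ s T (h t ht) hmin
end
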